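/- Let G be a two-generated finite 2-group whose central quotient G/Z(G) is dihedral of order 2^{ℓ+1}. Then G is isomorphic to a group with presentation ⟨x, y, z | x^{2^n} = z^{r2^{ℓ-1}}, y^{2^m} = x^{s2^m} z^{t2^{ℓ-1}}, z^{2^ℓ} = 1, [y,x] = z, [z,x] = z^{-2}, [z,y] = z^{-2}⟩ for some integers n ≥ m ≥ 1, ℓ ≥ 2, 0 ≤ r ≤ 1, 0 ≤ s ≤ 2^{n-m} - 1, 0 ≤ t ≤ 1; moreover G/[G,G] ≅ C_{2^n} × C_{2^m} and [G,G] ≅ C_{2^ℓ}. -/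

import Mathlib

open FreeGroup in
/-- Relators of G_θ = ⟨x,y,z | x^{2^n} = z^{r·2^{ℓ-1}}, y^{2^m} = x^{s·2^m}·z^{t·2^{ℓ-1}},
z^{2^ℓ} = 1, [y,x] = z, [z,x] = z⁻², [z,y] = z⁻²⟩ (convention [y,x] = y⁻¹x⁻¹yx;
generators 0 ↦ x, 1 ↦ y, 2 ↦ z). -/
def relsGθ (n m ℓ r s t : ℕ) : Set (FreeGroup (Fin 3)) :=
  { (of 0) ^ (2 ^ n) * ((of 2) ^ (r * 2 ^ (ℓ - 1)))⁻¹,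
    (of 1) ^ (2 ^ m) * ((of 0) ^ (s * 2 ^ m) * (of 2) ^ (t * 2 ^ (ℓ - 1)))⁻¹,
    (of 2) ^ (2 ^ ℓ),
    (of 1)⁻¹ * (of 0)⁻¹ * of 1 * of 0 * (of 2)⁻¹,
    (of 2)⁻¹ * (of 0)⁻¹ * of 2 * of 0 * (of 2) ^ 2,
    (of 2)⁻¹ * (of 1)⁻¹ * of 2 * of 1 * (of 2) ^ 2 }

abbrev Gθ (n m ℓ r s t : ℕ) := PresentedGroup (relsGθ n m ℓ r s t)

/-! With `z = [y, x]`, the squares of `x` and `y` are central exactly when conjugation by `x` and by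
`y` inverts `z`; this is the case once `x` and `y` lift two reflections generating the dihedral
quotient. Then `⟨z⟩` is the derived subgroup, and `y(xy)ᵏy⁻¹ = (xy)ᵏzᵏ` shows that `(xy)ᵏ` is
central iff `zᵏ = 1`, so `z` has the order of the rotation `xy` modulo the centre. An element of
`⟨z⟩` that commutes with `x` is its own inverse, hence a power of `z ^ 2 ^ (ℓ - 1)`, and this yields
the parameters `r` and `t`. The presented group maps onto `G`, and its order is at most that of `G`
because both are computed along `1 ≤ ⟨z⟩ ≤ ⟨x, z⟩ ≤ G`. -/

open Subgroup

section Group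

variable {G H : Type*} [Group G] [Group H]

lemma closure_pair_map_eq_top {x y : G} (hgen : closure {x, y} = ⊤) {f : G →* H}
    (hf : Function.Surjective f) : closure {f x, f y} = ⊤ := by
  rw [← Set.image_pair, ← f.map_closure, hgen, map_top_of_surjective f hf]

lemma closure_pair_mul_right_eq {a b u : G} (hu : u ∈ zpowers a) :
    closure {a, b * u} = closure {a, b} := by
  have hle (b u : G) (hu : u ∈ zpowers a) : closure {a, b * u} ≤ closure {a, b} := by
    have ha : a ∈ closure {a, b} := subset_closure (by simp)
    have hb : b ∈ closure {a, b} := subset_closure (by simp)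
    exact (closure_le _).2 (Set.pair_subset ha (mul_mem hb (zpowers_le.2 ha hu)))
  refine le_antisymm (hle b u hu) ?_
  simpa only [mul_inv_cancel_right] using hle (b * u) u⁻¹ (inv_mem hu)

lemma mem_center_iff_commute_of_closure_pair_eq_top {x y : G} (hgen : closure {x, y} = ⊤) {g : G} :
    g ∈ center G ↔ Commute g x ∧ Commute g y := by
  simp [center_eq_iInf hgen, mem_centralizer_singleton_iff, Commute, SemiconjBy]

lemma isMulCommutative_of_closure_pair_eq_top {x y : G} (hgen : closure {x, y} = ⊤)
    (hxy : Commute x y) : IsMulCommutative G := by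
  have hx : x ∈ center G :=
    (mem_center_iff_commute_of_closure_pair_eq_top hgen).2 ⟨.refl x, hxy⟩
  have hy : y ∈ center G :=
    (mem_center_iff_commute_of_closure_pair_eq_top hgen).2 ⟨hxy.symm, .refl y⟩
  have hcenter : center G = ⊤ :=
    top_le_iff.1 (hgen ▸ (closure_le _).2 (Set.pair_subset hx hy))
  exact ⟨⟨fun a b ↦ (mem_center_iff.1 (hcenter ▸ mem_top a) b).symm⟩⟩

lemma orderOf_dvd_or_dvd_of_isPGroup {p : ℕ} [Fact p.Prime] (hG : IsPGroup p G) (x y : G) :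
    orderOf x ∣ orderOf y ∨ orderOf y ∣ orderOf x := by
  obtain ⟨a, ha⟩ := IsPGroup.iff_orderOf.1 hG x
  obtain ⟨b, hb⟩ := IsPGroup.iff_orderOf.1 hG y
  rw [ha, hb]
  exact (le_total a b).imp (pow_dvd_pow p) (pow_dvd_pow p)

lemma exists_lt_eq_pow_mul_of_mem_zpowers {x v : G} {a b : ℕ} (hx : orderOf x = a * b)
    (hpos : 0 < a * b) (hv : v ∈ zpowers x) (hvb : v ^ b = 1) : ∃ s < b, v = x ^ (s * a) := by
  classical
  obtain ⟨k, hk, rfl⟩ := Finset.mem_image.1 <|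
    (orderOf_pos_iff.1 (hx ▸ hpos)).mem_zpowers_iff_mem_range_orderOf.1 hv
  obtain ⟨s, rfl⟩ : a ∣ k := by
    rw [← pow_mul, ← orderOf_dvd_iff_pow_eq_one, hx] at hvb
    exact Nat.dvd_of_mul_dvd_mul_right (Nat.pos_of_mul_pos_left hpos) hvb
  rw [hx, Finset.mem_range] at hk
  exact ⟨s, Nat.lt_of_mul_lt_mul_left hk, by rw [mul_comm]⟩

lemma exists_zpow_of_mem_closure_involutions {a b : G} (ha : a * a = 1) (hb : b * b = 1) {g : G}
    (hg : g ∈ closure {a, b}) : ∃ k : ℤ, g = (a * b) ^ k ∨ g = (a * b) ^ k * a := by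
  have ha' : a⁻¹ = a := inv_eq_of_mul_eq_one_left ha
  have hb' : b⁻¹ = b := inv_eq_of_mul_eq_one_left hb
  have mul_a (k : ℤ) : (a * b) ^ k * a * a = (a * b) ^ k := by rw [mul_assoc, ha, mul_one]
  have mul_b (k : ℤ) : (a * b) ^ k * b = (a * b) ^ (k - 1) * a := by
    rw [zpow_sub_one, mul_inv_rev, ha', hb', mul_assoc, mul_assoc b, ha, mul_one]
  have mul_a_b (k : ℤ) : (a * b) ^ k * a * b = (a * b) ^ (k + 1) := by
    rw [zpow_add_one, mul_assoc]
  have step (g w : G) (hw : w ∈ ({a, b} : Set G))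
      (h : ∃ k : ℤ, g = (a * b) ^ k ∨ g = (a * b) ^ k * a) :
      ∃ k : ℤ, g * w = (a * b) ^ k ∨ g * w = (a * b) ^ k * a := by
    obtain ⟨k, rfl | rfl⟩ := h <;> obtain rfl | rfl := hw
    · exact ⟨k, .inr rfl⟩
    · exact ⟨k - 1, .inr (mul_b k)⟩
    · exact ⟨k, .inl (mul_a k)⟩
    · exact ⟨k + 1, .inl (mul_a_b k)⟩
  induction hg using closure_induction_right with
  | one => exact ⟨0, .inl (zpow_zero _).symm⟩
  | mul_right g _ w hw ih => exact step g w hw ih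
  | mul_inv_cancel g _ w hw ih =>
    have hw' : w⁻¹ = w := by obtain rfl | rfl := hw <;> assumption
    rw [hw']
    exact step g w hw ih

end Group

section CommGroup

variable {A : Type*} [CommGroup A] {x y : A}

lemma zpow_mem_zpowers_iff_index_dvd (hgen : closure {x, y} = ⊤) (k : ℤ) :
    y ^ k ∈ zpowers x ↔ ((zpowers x).index : ℤ) ∣ k := by
  have hx : (x : A ⧸ zpowers x) = 1 := (QuotientGroup.eq_one_iff x).2 (mem_zpowers x)
  have hy : zpowers (y : A ⧸ zpowers x) = ⊤ := by
    have hmap := closure_pair_map_eq_top hgen (QuotientGroup.mk'_surjective (zpowers x))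
    rwa [QuotientGroup.mk'_apply, QuotientGroup.mk'_apply, hx, closure_insert_one,
      ← zpowers_eq_closure] at hmap
  rw [← QuotientGroup.eq_one_iff, QuotientGroup.mk_zpow, ← orderOf_dvd_iff_zpow_eq_one,
    orderOf_eq_card_of_zpowers_eq_top hy, index]

lemma pow_mem_zpowers_iff_index_dvd (hgen : closure {x, y} = ⊤) (k : ℕ) :
    y ^ k ∈ zpowers x ↔ (zpowers x).index ∣ k := by
  rw [← zpow_natCast, zpow_mem_zpowers_iff_index_dvd hgen, Int.natCast_dvd_natCast]

lemma nonempty_mulEquiv_zpowers_prod (hgen : closure {x, y} = ⊤)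
    (hdisj : Disjoint (zpowers x) (zpowers y)) : Nonempty (A ≃* zpowers x × zpowers y) := by
  let f := (zpowers x).subtype.noncommCoprod (zpowers y).subtype fun _ _ ↦ Commute.all _ _
  have hinj : Function.Injective f := by
    rw [MonoidHom.noncommCoprod_injective, range_subtype, range_subtype]
    exact ⟨subtype_injective _, subtype_injective _, hdisj⟩
  have hsurj : Function.Surjective f := by
    rw [← MonoidHom.range_eq_top, MonoidHom.noncommCoprod_range, range_subtype, range_subtype,
      ← hgen, Set.insert_eq, Subgroup.closure_union, zpowers_eq_closure, zpowers_eq_closure]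
  exact ⟨(MulEquiv.ofBijective f ⟨hinj, hsurj⟩).symm⟩

lemma nonempty_zpowers_mulEquiv_zmod {G : Type*} [Group G] {g : G} {k : ℕ} (hg : orderOf g = k) :
    Nonempty (zpowers g ≃* Multiplicative (ZMod k)) := by
  rw [← hg, ← Nat.card_zpowers]
  exact ⟨(zmodCyclicMulEquiv inferInstance).symm⟩

-- Replacing `y` by `y / x ^ s` turns `y` into a generator of a complement of `⟨x⟩`.
lemma nonempty_mulEquiv_prod_zmod_of_pow_index_eq (hgen : closure {x, y} = ⊤) {s : ℕ}
    (hs : y ^ (zpowers x).index = x ^ (s * (zpowers x).index)) :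
    Nonempty (A ≃*
      Multiplicative (ZMod (orderOf x)) × Multiplicative (ZMod (zpowers x).index)) := by
  obtain ⟨w, rfl⟩ : ∃ w, y = w * x ^ s := ⟨y / x ^ s, (div_mul_cancel _ _).symm⟩
  have hw : w ^ (zpowers x).index = 1 := by
    rwa [mul_pow, ← pow_mul, mul_eq_right] at hs
  have hgen' : closure {x, w} = ⊤ := by
    rwa [closure_pair_mul_right_eq (pow_mem (mem_zpowers x) s)] at hgen
  have horder : orderOf w = (zpowers x).index := by
    refine Nat.dvd_antisymm (orderOf_dvd_of_pow_eq_one hw) ?_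
    rw [← pow_mem_zpowers_iff_index_dvd hgen', pow_orderOf_eq_one]
    exact one_mem _
  have hdisj : Disjoint (zpowers x) (zpowers w) := by
    rw [disjoint_def]
    rintro _ hx ⟨k, rfl⟩
    have hk := (zpow_mem_zpowers_iff_index_dvd hgen' k).1 hx
    rwa [← horder, orderOf_dvd_iff_zpow_eq_one] at hk
  obtain ⟨e⟩ := nonempty_mulEquiv_zpowers_prod hgen' hdisj
  obtain ⟨ex⟩ := nonempty_zpowers_mulEquiv_zmod (g := x) rfl
  obtain ⟨ew⟩ := nonempty_zpowers_mulEquiv_zmod horder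
  exact ⟨e.trans (ex.prodCongr ew)⟩

-- The presented relation asks for `y ^ p ^ m` to be a power of `x ^ p ^ m`, not just of `x`.
lemma exists_pow_eq_pow_mul_of_isPGroup {p : ℕ} [Fact p.Prime] (hA : IsPGroup p A)
    (hgen : closure {x, y} = ⊤) (hord : orderOf y ∣ orderOf x) (hy : y ∉ zpowers x) :
    ∃ n m s : ℕ, 1 ≤ m ∧ m ≤ n ∧ s < p ^ (n - m) ∧ orderOf x = p ^ n ∧
      (zpowers x).index = p ^ m ∧ y ^ p ^ m = x ^ (s * p ^ m) := by
  have hp : p.Prime := Fact.out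
  obtain ⟨n, hn⟩ := IsPGroup.iff_orderOf.1 hA x
  have hindex (k : ℕ) : y ^ k ∈ zpowers x ↔ (zpowers x).index ∣ k :=
    pow_mem_zpowers_iff_index_dvd hgen k
  have hyn : y ^ p ^ n = 1 := orderOf_dvd_iff_pow_eq_one.1 (hn ▸ hord)
  obtain ⟨m, hmn, hm⟩ : ∃ m ≤ n, (zpowers x).index = p ^ m :=
    (Nat.dvd_prime_pow hp).1 ((hindex _).1 (hyn ▸ one_mem _))
  have hm1 : m ≠ 0 := by
    rintro rfl
    exact hy (by simpa [hm] using hindex 1)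
  have hsplit : p ^ m * p ^ (n - m) = p ^ n := by rw [← pow_add, Nat.add_sub_cancel' hmn]
  obtain ⟨s, hs, hys⟩ := exists_lt_eq_pow_mul_of_mem_zpowers (hn.trans hsplit.symm)
    (hsplit ▸ pow_pos hp.pos n) ((hindex _).2 hm.dvd) (by rw [← pow_mul, hsplit, hyn])
  exact ⟨n, m, s, Nat.one_le_iff_ne_zero.2 hm1, hmn, hs, hn, hm, hys⟩

end CommGroup

/-- The commutator relations of `Gθ`, namely `[y, x] = z` and `[z, x] = [z, y] = z⁻²`, in the form
in which they are used: `z` is the commutator of `y` and `x`, and conjugation by `x` and by `y`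
inverts it. -/
structure IsInvertedCommutator {G : Type*} [Group G] (x y z : G) : Prop where
  mul_eq : y * x = x * y * z
  semiconj_left : SemiconjBy x z z⁻¹
  semiconj_right : SemiconjBy y z z⁻¹

namespace IsInvertedCommutator

variable {G : Type*} [Group G] {x y z : G}

lemma of_sq_mem_center (hx : x ^ 2 ∈ center G) (hy : y ^ 2 ∈ center G) :
    IsInvertedCommutator x y (y⁻¹ * x⁻¹ * y * x) where
  mul_eq := by group
  semiconj_left := by
    have hx' : x * y⁻¹ * x⁻¹ = x⁻¹ * y⁻¹ * x := by
      have := mem_center_iff.1 hx y⁻¹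
      calc x * y⁻¹ * x⁻¹ = x⁻¹ * (x ^ 2 * y⁻¹) * x⁻¹ := by group
        _ = x⁻¹ * y⁻¹ * x := by rw [← this]; group
    calc x * (y⁻¹ * x⁻¹ * y * x) = x * y⁻¹ * x⁻¹ * y * x := by group
      _ = (y⁻¹ * x⁻¹ * y * x)⁻¹ * x := by rw [hx']; group
  semiconj_right := by
    have hy' : y⁻¹ * x * y = y * x * y⁻¹ := by
      have := mem_center_iff.1 hy x
      calc y⁻¹ * x * y = y⁻¹ * (x * y ^ 2) * y⁻¹ := by group
        _ = y * x * y⁻¹ := by rw [this]; group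
    calc y * (y⁻¹ * x⁻¹ * y * x) = x⁻¹ * (y * x * y⁻¹) * y := by group
      _ = (y⁻¹ * x⁻¹ * y * x)⁻¹ * y := by rw [← hy']; group

lemma symm (h : IsInvertedCommutator x y z) : IsInvertedCommutator y x z⁻¹ where
  mul_eq := by rw [h.mul_eq, mul_inv_cancel_right]
  semiconj_left := h.semiconj_right.inv_right
  semiconj_right := h.semiconj_left.inv_right

lemma commute_mul (h : IsInvertedCommutator x y z) : Commute (x * y) z := by
  have := h.semiconj_left.inv_right.mul_left h.semiconj_right
  rwa [inv_inv] at this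

lemma commute_left_sq_right (h : IsInvertedCommutator x y z) : Commute x (y ^ 2) := by
  have hzy : z * y * z = y := by rw [mul_assoc, h.semiconj_right.eq, mul_inv_cancel_left]
  calc x * y ^ 2 = x * y * (z * y * z) := by rw [hzy, sq, mul_assoc]
    _ = x * y * z * y * z := by simp only [mul_assoc]
    _ = y * x * y * z := by rw [h.mul_eq]
    _ = y * (x * y * z) := by simp only [mul_assoc]
    _ = y ^ 2 * x := by rw [← h.mul_eq, sq, mul_assoc]

lemma mul_pow_mem_center_iff (h : IsInvertedCommutator x y z) (hgen : closure {x, y} = ⊤) (k : ℕ) :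
    (x * y) ^ k ∈ center G ↔ z ^ k = 1 := by
  have hgen' : closure {y, x * y} = ⊤ := by
    rwa [closure_pair_mul_right_eq (mem_zpowers y), Set.pair_comm]
  have hconj : SemiconjBy y ((x * y) ^ k) ((x * y) ^ k * z ^ k) := by
    rw [← h.commute_mul.mul_pow]
    refine SemiconjBy.pow_right ?_ k
    rw [SemiconjBy, ← mul_assoc, h.mul_eq]
  rw [mem_center_iff_commute_of_closure_pair_eq_top hgen',
    and_iff_left (Commute.pow_self (x * y) k), Commute.symm_iff, Commute, SemiconjBy, hconj.eq,
    mul_left_inj, mul_eq_left]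

lemma sq_eq_one_of_commute (h : IsInvertedCommutator x y z) {w : G} (hw : w ∈ zpowers z)
    (hcomm : Commute x w) : w ^ 2 = 1 := by
  obtain ⟨k, rfl⟩ := hw
  have hinv : x * z ^ k = (z ^ k)⁻¹ * x := by
    rw [← inv_zpow]; exact h.semiconj_left.zpow_right k
  rw [hcomm.eq, mul_left_inj, eq_inv_iff_mul_eq_one] at hinv
  rw [sq, hinv]

lemma zpowers_normal (h : IsInvertedCommutator x y z) (hgen : closure {x, y} = ⊤) :
    (zpowers z).Normal := by
  have hmem {u : G} (hu : SemiconjBy u z z⁻¹) : u ∈ normalizer (zpowers z : Set G) := by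
    rw [mem_normalizer_iff_map_conj_eq, MonoidHom.map_zpowers, MonoidHom.coe_coe,
      MulAut.conj_apply, hu.eq, mul_inv_cancel_right, zpowers_inv]
  rw [← normalizer_eq_top_iff, ← top_le_iff, ← hgen, closure_le]
  exact Set.pair_subset (hmem h.semiconj_left) (hmem h.semiconj_right)

open scoped commutatorElement in
lemma mem_commutator (h : IsInvertedCommutator x y z) : z ∈ commutator G := by
  have hz : z = ⁅y⁻¹, x⁻¹⁆ := by
    rw [commutatorElement_def, inv_inv, inv_inv, mul_assoc, h.mul_eq]; group
  exact hz ▸ commutator_mem_commutator (mem_top _) (mem_top _)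

lemma commutator_eq_zpowers (h : IsInvertedCommutator x y z) (hgen : closure {x, y} = ⊤) :
    commutator G = zpowers z := by
  have := h.zpowers_normal hgen
  refine le_antisymm ?_ ((zpowers_le).2 h.mem_commutator)
  let q := QuotientGroup.mk' (zpowers z)
  have hz : q z = 1 := (QuotientGroup.eq_one_iff z).2 (mem_zpowers z)
  have hcomm : Commute (q x) (q y) := by
    rw [Commute, SemiconjBy, ← map_mul q y x, h.mul_eq, map_mul, hz, mul_one, map_mul]
  rw [← Normal.quotient_commutative_iff_commutator_le]
  exact isMulCommutative_of_closure_pair_eq_top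
    (closure_pair_map_eq_top hgen (QuotientGroup.mk'_surjective _)) hcomm

lemma of_notMem_zpowers_of (h : IsInvertedCommutator x y z) (hgen : closure {x, y} = ⊤)
    (hz : 2 ∣ orderOf z) : Abelianization.of y ∉ zpowers (Abelianization.of x) := by
  rintro ⟨a, ha : Abelianization.of x ^ a = Abelianization.of y⟩
  obtain ⟨c, hc : z ^ c = (x ^ a)⁻¹ * y⟩ : (x ^ a)⁻¹ * y ∈ zpowers z := by
    rw [← h.commutator_eq_zpowers hgen, ← QuotientGroup.eq]
    exact (map_zpow Abelianization.of x a).trans ha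
  have hy : y = x ^ a * z ^ c := by rw [hc, mul_inv_cancel_left]
  have hzx : z ^ c * x = x * (z⁻¹) ^ c := by
    have hx : SemiconjBy x z⁻¹ z := by simpa only [inv_inv] using h.semiconj_left.inv_right
    exact (hx.zpow_right c).eq.symm
  have hyx : x ^ a * x * (z⁻¹) ^ c = x ^ a * x * z ^ (c + 1) :=
    calc x ^ a * x * (z⁻¹) ^ c = y * x := by rw [hy, mul_assoc, mul_assoc, hzx]
      _ = x ^ a * x * z ^ (c + 1) := by
        rw [h.mul_eq, hy, ← mul_assoc, mul_self_zpow, ← zpow_add_one, mul_assoc, zpow_add_one z]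
  have hone : z ^ (2 * c + 1) = 1 := by
    rw [mul_right_inj, inv_zpow, inv_eq_iff_mul_eq_one, ← zpow_add] at hyx
    rw [← hyx]
    congr 1
    ring
  have hdvd := (Int.natCast_dvd_natCast.2 hz).trans (orderOf_dvd_iff_zpow_eq_one.2 hone)
  omega

lemma card_eq (h : IsInvertedCommutator x y z) (hgen : closure {x, y} = ⊤) :
    Nat.card G =
      orderOf (Abelianization.of x) * (zpowers (Abelianization.of x)).index * orderOf z := by
  rw [card_eq_card_quotient_mul_card_subgroup (commutator G), h.commutator_eq_zpowers hgen,
    Nat.card_zpowers, ← Nat.card_zpowers (Abelianization.of x), card_mul_index,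
    ← h.commutator_eq_zpowers hgen]
  rfl

lemma exists_lt_eq_mul_pow_of_commute (h : IsInvertedCommutator x y z)
    (hgen : closure {x, y} = ⊤) {ℓ : ℕ} (hℓ : 1 ≤ ℓ) (hz : orderOf z = 2 ^ ℓ) {u v : G}
    (hu : Commute x u) (hv : Commute x v) (huv : Abelianization.of u = Abelianization.of v) :
    ∃ t < 2, u = v * z ^ (t * 2 ^ (ℓ - 1)) := by
  have hmem : v⁻¹ * u ∈ zpowers z := by
    rw [← h.commutator_eq_zpowers hgen, ← QuotientGroup.eq]
    exact huv.symm
  have hsplit : 2 ^ (ℓ - 1) * 2 = 2 ^ ℓ := by rw [← pow_succ, Nat.sub_add_cancel hℓ]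
  obtain ⟨t, ht, hvt⟩ := exists_lt_eq_pow_mul_of_mem_zpowers (hz.trans hsplit.symm) (by positivity)
    hmem (h.sq_eq_one_of_commute hmem (hv.inv_right.mul_right hu))
  exact ⟨t, ht, by rw [← hvt, mul_inv_cancel_left]⟩

end IsInvertedCommutator

/-- The defining relations of `Gθ n m ℓ r s t`, satisfied by elements of an arbitrary group. -/
structure SatisfiesGθ {G : Type*} [Group G] (n m ℓ r s t : ℕ) (x y z : G) : Prop
    extends IsInvertedCommutator x y z where
  pow_left : x ^ 2 ^ n = z ^ (r * 2 ^ (ℓ - 1))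
  pow_right : y ^ 2 ^ m = x ^ (s * 2 ^ m) * z ^ (t * 2 ^ (ℓ - 1))
  pow_commutator : z ^ 2 ^ ℓ = 1

lemma IsInvertedCommutator.exists_satisfiesGθ {G : Type*} [Group G] {x y z : G}
    (h : IsInvertedCommutator x y z) (hgen : closure {x, y} = ⊤) {n m ℓ s : ℕ} (hℓ : 1 ≤ ℓ)
    (hz : orderOf z = 2 ^ ℓ) (hm : 1 ≤ m) (hx : Abelianization.of x ^ 2 ^ n = 1)
    (hy : Abelianization.of y ^ 2 ^ m = Abelianization.of x ^ (s * 2 ^ m)) :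
    ∃ r t : ℕ, r ≤ 1 ∧ t ≤ 1 ∧ SatisfiesGθ n m ℓ r s t x y z := by
  have hcomm : Commute x (y ^ 2 ^ m) := by
    rw [← Nat.sub_add_cancel hm, pow_succ', pow_mul]
    exact h.commute_left_sq_right.pow_right _
  obtain ⟨r, hr, hxr⟩ := h.exists_lt_eq_mul_pow_of_commute hgen hℓ hz (Commute.self_pow x (2 ^ n))
    (Commute.one_right x) (by rwa [map_pow, map_one])
  obtain ⟨t, ht, hyt⟩ := h.exists_lt_eq_mul_pow_of_commute hgen hℓ hz hcomm
    (Commute.self_pow x (s * 2 ^ m)) (by rwa [map_pow, map_pow])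
  exact ⟨r, t, Nat.lt_succ_iff.1 hr, Nat.lt_succ_iff.1 ht,
    { h with
      pow_left := by rw [hxr, one_mul]
      pow_right := hyt
      pow_commutator := hz ▸ pow_orderOf_eq_one z }⟩

lemma forall_mem_relsGθ_iff {G : Type*} [Group G] {n m ℓ r s t : ℕ} {f : FreeGroup (Fin 3) →* G} :
    (∀ w ∈ relsGθ n m ℓ r s t, f w = 1) ↔
      SatisfiesGθ n m ℓ r s t (f (.of 0)) (f (.of 1)) (f (.of 2)) := by
  have hcomm (x y z : G) : y⁻¹ * x⁻¹ * y * x * z⁻¹ = 1 ↔ y * x = x * y * z := by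
    rw [mul_inv_eq_one, mul_assoc _ y x, ← mul_inv_rev, inv_mul_eq_iff_eq_mul]
  have hinvert (x z : G) : z⁻¹ * x⁻¹ * z * x * z ^ 2 = 1 ↔ SemiconjBy x z z⁻¹ := by
    have hconj : z⁻¹ * x⁻¹ * z * x * z ^ 2 = z⁻¹ * ((z⁻¹ * x)⁻¹ * (x * z)) * z⁻¹⁻¹ := by
      simp only [sq, mul_inv_rev, inv_inv, mul_assoc]
    rw [hconj, conj_eq_one_iff, inv_mul_eq_one, eq_comm, SemiconjBy]
  simp only [relsGθ, Set.mem_insert_iff, Set.mem_singleton_iff, forall_eq_or_imp, forall_eq,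
    map_mul, map_inv, map_pow, mul_inv_eq_one (a := _ ^ _), hcomm, hinvert]
  exact ⟨fun ⟨h₁, h₂, h₃, h₄, h₅, h₆⟩ ↦ ⟨⟨h₄, h₅, h₆⟩, h₁, h₂, h₃⟩,
    fun h ↦ ⟨h.pow_left, h.pow_right, h.pow_commutator, h.mul_eq, h.semiconj_left,
      h.semiconj_right⟩⟩

lemma satisfiesGθ_of (n m ℓ r s t : ℕ) :
    SatisfiesGθ n m ℓ r s t (.of 0 : Gθ n m ℓ r s t) (.of 1) (.of 2) :=
  forall_mem_relsGθ_iff.1 fun _ ↦ PresentedGroup.one_of_mem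

lemma closure_of_zero_of_one_eq_top (n m ℓ r s t : ℕ) :
    closure {(.of 0 : Gθ n m ℓ r s t), .of 1} = ⊤ := by
  rw [← top_le_iff, ← PresentedGroup.closure_range_of, closure_le]
  have h₀ : .of 0 ∈ closure {(.of 0 : Gθ n m ℓ r s t), .of 1} := subset_closure (by simp)
  have h₁ : .of 1 ∈ closure {(.of 0 : Gθ n m ℓ r s t), .of 1} := subset_closure (by simp)
  rintro _ ⟨i, rfl⟩
  fin_cases i
  · exact h₀
  · exact h₁
  · exact (mul_mem_cancel_left (mul_mem h₀ h₁)).1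
      ((satisfiesGθ_of n m ℓ r s t).mul_eq ▸ mul_mem h₁ h₀)

namespace SatisfiesGθ

variable {G : Type*} [Group G] {n m ℓ r s t : ℕ} {x y z : G}

lemma card_dvd (h : SatisfiesGθ n m ℓ r s t x y z) (hgen : closure {x, y} = ⊤) :
    Nat.card G ∣ 2 ^ n * 2 ^ m * 2 ^ ℓ := by
  have hz : Abelianization.of z = 1 := (QuotientGroup.eq_one_iff z).2 h.mem_commutator
  have hX : orderOf (Abelianization.of x) ∣ 2 ^ n := by
    refine orderOf_dvd_of_pow_eq_one ?_
    rw [← map_pow, h.pow_left, map_pow, hz, one_pow]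
  have hY : (zpowers (Abelianization.of x)).index ∣ 2 ^ m := by
    rw [← pow_mem_zpowers_iff_index_dvd
      (closure_pair_map_eq_top hgen QuotientGroup.mk_surjective), ← map_pow, h.pow_right, map_mul,
      map_pow _ z, hz, one_pow, mul_one, map_pow]
    exact pow_mem (mem_zpowers _) _
  rw [h.card_eq hgen]
  exact mul_dvd_mul (mul_dvd_mul hX hY) (orderOf_dvd_of_pow_eq_one h.pow_commutator)

lemma nonempty_mulEquiv (h : SatisfiesGθ n m ℓ r s t x y z) (hgen : closure {x, y} = ⊤)
    (hcard : Nat.card G = 2 ^ n * 2 ^ m * 2 ^ ℓ) : Nonempty (G ≃* Gθ n m ℓ r s t) := by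
  have hrels : ∀ w ∈ relsGθ n m ℓ r s t, FreeGroup.lift ![x, y, z] w = 1 :=
    forall_mem_relsGθ_iff.2 (by simpa using h)
  let f : Gθ n m ℓ r s t →* G := PresentedGroup.toGroup hrels
  have hsurj : Function.Surjective f := by
    rw [← MonoidHom.range_eq_top, ← top_le_iff, ← hgen, closure_le]
    exact Set.pair_subset ⟨.of 0, PresentedGroup.toGroup.of hrels⟩
      ⟨.of 1, PresentedGroup.toGroup.of hrels⟩
  have hdvd : Nat.card (Gθ n m ℓ r s t) ∣ 2 ^ n * 2 ^ m * 2 ^ ℓ :=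
    (satisfiesGθ_of n m ℓ r s t).card_dvd (closure_of_zero_of_one_eq_top n m ℓ r s t)
  have hpos : 0 < 2 ^ n * 2 ^ m * 2 ^ ℓ := by positivity
  have : Finite (Gθ n m ℓ r s t) :=
    Nat.finite_of_card_ne_zero (ne_zero_of_dvd_ne_zero hpos.ne' hdvd)
  have hbij : Function.Bijective f :=
    hsurj.bijective_of_nat_card_le (hcard ▸ Nat.le_of_dvd hpos hdvd)
  exact ⟨(MulEquiv.ofBijective f hbij).symm⟩

end SatisfiesGθ

section Dihedral

open DihedralGroup

variable {N : ℕ}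

lemma isUnit_sub_of_closure_sr_sr_eq_top {i j : ZMod N} (h : closure {sr i, sr j} = ⊤) :
    IsUnit (j - i) := by
  obtain ⟨k, hk | hk⟩ := exists_zpow_of_mem_closure_involutions (sr_mul_self i) (sr_mul_self j)
    (h ▸ mem_top (r 1))
  · rw [sr_mul_sr, r_zpow, r.injEq] at hk
    exact .of_mul_eq_one _ hk.symm
  · simp [sr_mul_sr] at hk

lemma closure_r_r_ne_top (i j : ZMod N) : closure {r i, r j} ≠ ⊤ := by
  intro h
  have hr (i : ZMod N) : r i ∈ zpowers (r (1 : ZMod N)) := by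
    obtain ⟨k, rfl⟩ := ZMod.intCast_surjective i
    exact ⟨k, r_one_zpow k⟩
  have hle : closure {r i, r j} ≤ zpowers (r 1) :=
    (closure_le _).2 (Set.pair_subset (hr i) (hr j))
  obtain ⟨k, hk⟩ := hle (h ▸ mem_top (sr 0))
  simp at hk

lemma orderOf_r_of_isUnit {u : ZMod N} (hu : IsUnit u) : orderOf (r u) = N := by
  refine Eq.trans (orderOf_eq_orderOf_iff.2 fun k ↦ ?_) orderOf_r_one
  rw [r_pow, r_pow, one_mul, one_def, r.injEq, r.injEq, hu.mul_right_eq_zero]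

variable {G : Type*} [Group G] {x y : G} {φ : G →* DihedralGroup N}

lemma exists_closure_pair_map_eq_sr (hgen : closure {x, y} = ⊤) (hφ : Function.Surjective φ) :
    ∃ x' y' : G, closure {x', y'} = ⊤ ∧ ∃ i j, φ x' = sr i ∧ φ y' = sr j := by
  have hmul {a b : G} (hab : closure {a, b} = ⊤) : closure {a, b * a} = ⊤ := by
    rwa [closure_pair_mul_right_eq (mem_zpowers a)]
  have hgenφ := closure_pair_map_eq_top hgen hφ
  rcases hx : φ x with i | i <;> rcases hy : φ y with j | j
  · exact (closure_r_r_ne_top i j (hx ▸ hy ▸ hgenφ)).elim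
  · rw [Set.pair_comm] at hgen
    exact ⟨y, x * y, hmul hgen, j, j - i, hy, by rw [map_mul, hx, hy, r_mul_sr]⟩
  · exact ⟨x, y * x, hmul hgen, i, i - j, hx, by rw [map_mul, hx, hy, r_mul_sr]⟩
  · exact ⟨x, y, hgen, i, j, hx, hy⟩

lemma exists_isInvertedCommutator_of_ker_eq_center (hgen : closure {x, y} = ⊤)
    (hφ : Function.Surjective φ) (hker : φ.ker = center G) :
    ∃ x' y' z : G, closure {x', y'} = ⊤ ∧ IsInvertedCommutator x' y' z ∧ orderOf z = N := by
  obtain ⟨x', y', hgen', i, j, hx, hy⟩ := exists_closure_pair_map_eq_sr hgen hφ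
  have hsq {g : G} {i : ZMod N} (hg : φ g = sr i) : g ^ 2 ∈ center G := by
    rw [← hker, φ.mem_ker, map_pow, hg, sq, sr_mul_self]
  have h := IsInvertedCommutator.of_sq_mem_center (hsq hx) (hsq hy)
  refine ⟨x', y', _, hgen', h, ?_⟩
  have hunit : IsUnit (j - i) :=
    isUnit_sub_of_closure_sr_sr_eq_top (hx ▸ hy ▸ closure_pair_map_eq_top hgen' hφ)
  rw [← orderOf_r_of_isUnit hunit, ← sr_mul_sr, ← hx, ← hy, ← map_mul, orderOf_eq_orderOf_iff]
  intro k
  rw [← h.mul_pow_mem_center_iff hgen', ← hker, φ.mem_ker, map_pow]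

end Dihedral

-- For `ℓ = 1` the group `DihedralGroup 2` is the Klein four-group.
theorem stmt12_general {G : Type*} [Group G] (hG : IsPGroup 2 G)
    (x y : G) (hgen : closure {x, y} = ⊤) (ℓ : ℕ) (hℓ : 1 ≤ ℓ)
    (hdq : Nonempty ((G ⧸ center G) ≃* DihedralGroup (2 ^ ℓ))) :
    ∃ n m r s t : ℕ, 1 ≤ m ∧ m ≤ n ∧ r ≤ 1 ∧ s ≤ 2 ^ (n - m) - 1 ∧ t ≤ 1 ∧
      Nonempty (G ≃* Gθ n m ℓ r s t) ∧
      Nonempty ((G ⧸ commutator G) ≃*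
        (Multiplicative (ZMod (2 ^ n)) × Multiplicative (ZMod (2 ^ m)))) ∧
      Nonempty (commutator G ≃* Multiplicative (ZMod (2 ^ ℓ))) := by
  obtain ⟨e⟩ := hdq
  obtain ⟨x, y, z, hgen, h, hz⟩ := exists_isInvertedCommutator_of_ker_eq_center hgen
    (φ := e.toMonoidHom.comp (QuotientGroup.mk' (center G)))
    (e.surjective.comp (QuotientGroup.mk'_surjective _)) (by simp)
  wlog hord : orderOf (Abelianization.of y) ∣ orderOf (Abelianization.of x) generalizing x y z
  · exact this y x z⁻¹ (Set.pair_comm x y ▸ hgen) h.symm ((orderOf_inv z).trans hz) <|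
      (orderOf_dvd_or_dvd_of_isPGroup (hG.to_quotient (commutator G)) _ _).resolve_left hord
  have hY := h.of_notMem_zpowers_of hgen (hz ▸ dvd_pow_self 2 (Nat.one_le_iff_ne_zero.1 hℓ))
  have hgenA := closure_pair_map_eq_top hgen (QuotientGroup.mk'_surjective (commutator G))
  obtain ⟨n, m, s, hm, hmn, hs, hn, hindex, hys⟩ :=
    exists_pow_eq_pow_mul_of_isPGroup (hG.to_quotient (commutator G)) hgenA hord hY
  obtain ⟨r, t, hr, ht, hsat⟩ := h.exists_satisfiesGθ hgen hℓ hz hm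
    (hn ▸ pow_orderOf_eq_one (Abelianization.of x)) hys
  have hcard : Nat.card G = 2 ^ n * 2 ^ m * 2 ^ ℓ := by rw [h.card_eq hgen, hn, hindex, hz]
  have hA := nonempty_mulEquiv_prod_zmod_of_pow_index_eq hgenA (hindex.symm ▸ hys)
  refine ⟨n, m, r, s, t, hm, hmn, by omega, by omega, by omega, hsat.nonempty_mulEquiv hgen hcard,
    ?_, ?_⟩
  · exact hn ▸ hindex ▸ hA
  · rw [h.commutator_eq_zpowers hgen]
    exact nonempty_zpowers_mulEquiv_zmod hz

/-- A two-generated finite 2-group G whose central quotient is dihedral of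
order 2^{ℓ+1} (ℓ ≥ 2) is isomorphic to some G_θ with n ≥ m ≥ 1, r ≤ 1, s ≤ 2^{n-m}-1,
t ≤ 1; moreover G/[G,G] ≅ C_{2^n} × C_{2^m} and [G,G] ≅ C_{2^ℓ}. -/
theorem stmt12 {G : Type*} [Group G] [Finite G] (hG : IsPGroup 2 G)
    (x y : G) (hgen : Subgroup.closure {x, y} = ⊤)
    (ℓ : ℕ) (hℓ : 2 ≤ ℓ)
    (hdq : Nonempty ((G ⧸ Subgroup.center G) ≃* DihedralGroup (2 ^ ℓ))) :
    ∃ n m r s t : ℕ, 1 ≤ m ∧ m ≤ n ∧ r ≤ 1 ∧ s ≤ 2 ^ (n - m) - 1 ∧ t ≤ 1 ∧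
      Nonempty (G ≃* Gθ n m ℓ r s t) ∧
      Nonempty ((G ⧸ commutator G) ≃*
        (Multiplicative (ZMod (2 ^ n)) × Multiplicative (ZMod (2 ^ m)))) ∧
      Nonempty (commutator G ≃* Multiplicative (ZMod (2 ^ ℓ))) :=
  stmt12_general hG x y hgen ℓ (one_le_two.trans hℓ) hdq
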